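/- (Uniform convergence, case S < ∞.) Let S ∈ (0,∞), let m satisfy (M) and (M-S), i.e. lim_{z→0⁺} m'(z)² f(z) = 0 and lim_{z→S⁻} m'(z)² (f(S) − f(z)) = 0, and let (δ_k)_{k∈ℕ} be a vanishing sequence in (0, δ̄) with δ̄ < max m. For each k let z_{δ_k,1} < z_{δ_k,2} denote the two solutions of m(z) = δ_k, and define m_{δ_k}(z) := m(z_{δ_k,1} + (z_{δ_k,2} − z_{δ_k,1}) z / S) − δ_k for z ∈ (0,S), f_{δ_k}(z) := ∫₀^z √(2/m_{δ_k}(r)) dr, g_{δ_k} := f_{δ_k}^{−1}, and G̃_{δ_k} : [0, f(S)] → ℝ, G̃_{δ_k}(w) := m_{δ_k}'(g_{δ_k}(w)) √(w (f_{δ_k}(S) − w)). Then the map G̃ : [0, f(S)] → ℝ defined by G̃(w) := m'(g(w)) √(w (f(S) − w)) for w ∈ (0, f(S)), G̃(0) := 0, G̃(f(S)) := 0 (with g := f^{−1}) is continuous, and there exists a subsequence of (G̃_{δ_k})_{k∈ℕ} that converges to G̃ uniformly on [0, f(S)]. -/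

import Mathlib

open MeasureTheory Set Filter Topology

/-!
With `w = f_δ z` one has `G̃_δ(w)² = m_δ'(z)² f_δ(z) (f_δ(S) - f_δ(z))`. Inside `(0, S)` concavity
turns the local uniform convergence `m_δ → m` into that of the derivatives, and subadditivity gives
`m_δ ≤ m`, so that `f_δ - f` increases from `0` to `f_δ(S) - f(S)`, which tends to `0`. What remains
is the smallness of `m_δ'² f_δ` near `0`, uniformly in `δ`, the endpoint `S` being symmetric.

By (M-S) and `z √(2 / m z) ≤ f z`, the derivative of `m ^ (3 / 4)` is `o(z ^ (-1 / 2))`, so that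
`m z = o(z ^ (2 / 3))` and `m'(z)³ z ≤ (m z)³ / z² → 0`. This limit survives truncation: a concave
profile of slope `d > 0` at `x` lies above `r ↦ d r` on `(0, x)`, hence
`(m_δ'(x)² f_δ(x))² ≤ 8 m_δ'(x)³ x ≤ 8 m'(y)³ y`, where `y ≥ (z₂ - z₁) x / S` is the image of `x`
under the affine map of `[0, S]` onto `[z₁, z₂]`. The joint limits in `(δ, w)` obtained in this way
amount to uniform convergence on the compact interval `[0, f(S)]`, for the whole sequence.
-/

section ContinuousConvergence

variable {ι α β : Type*} [TopologicalSpace α] [UniformSpace β] {l : Filter ι} {s : Set α}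
  {F : ι → α → β} {f : α → β}

lemma continuousOn_of_forall_tendsto_prod [l.NeBot]
    (h : ∀ x ∈ s, Tendsto (fun p : ι × α => F p.1 p.2) (l ×ˢ 𝓝[s] x) (𝓝 (f x))) :
    ContinuousOn f s := by
  intro x hx
  refine (closed_nhds_basis (f x)).tendsto_right_iff.2 fun V hV => ?_
  have hnear : ∀ᶠ y in 𝓝[s] x, ∀ᶠ k in l, F k y ∈ V :=
    (tendsto_prod_swap.eventually ((h x hx).eventually hV.1)).curry
  filter_upwards [hnear, self_mem_nhdsWithin] with y hy hys
  have hpt : Tendsto (fun k => F k y) l (𝓝 (f y)) :=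
    (h y hys).comp (tendsto_id.prodMk (tendsto_const_pure.mono_right (pure_le_nhdsWithin hys)))
  exact hV.2.mem_of_tendsto hpt hy

lemma tendstoUniformlyOn_of_forall_tendsto_prod [l.NeBot] (hs : IsCompact s)
    (h : ∀ x ∈ s, Tendsto (fun p : ι × α => F p.1 p.2) (l ×ˢ 𝓝[s] x) (𝓝 (f x))) :
    TendstoUniformlyOn F f l s := by
  rw [← tendstoLocallyUniformlyOn_iff_tendstoUniformlyOn_of_compact hs,
    tendstoLocallyUniformlyOn_iff_forall_tendsto]
  intro x hx
  have hf : Tendsto (fun p : ι × α => f p.2) (l ×ˢ 𝓝[s] x) (𝓝 (f x)) :=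
    (continuousOn_of_forall_tendsto_prod h x hx).tendsto.comp tendsto_snd
  exact (hf.prodMk_nhds (h x hx)).mono_right (nhds_le_uniformity _)

end ContinuousConvergence

lemma tendsto_of_strictMonoOn_of_tendsto_comp {α β γ : Type*} [LinearOrder α]
    [TopologicalSpace α] [OrderTopology α] [LinearOrder β] [TopologicalSpace β] [OrderTopology β]
    {a b x : α} {f : α → β} {L : Filter γ} {u : γ → α} (hf : StrictMonoOn f (Icc a b))
    (hx : x ∈ Icc a b) (hu : ∀ᶠ p in L, u p ∈ Icc a b)
    (h : Tendsto (fun p => f (u p)) L (𝓝 (f x))) : Tendsto u L (𝓝 x) := by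
  refine tendsto_order.2 ⟨fun c hc => ?_, fun c hc => ?_⟩
  · rcases lt_or_ge c a with hca | hac
    · exact hu.mono fun p hp => hca.trans_le hp.1
    · have hcI : c ∈ Icc a b := ⟨hac, hc.le.trans hx.2⟩
      filter_upwards [hu, h.eventually_const_lt (hf hcI hx hc)] with p hp hlt
      exact (hf.lt_iff_lt hcI hp).1 hlt
  · rcases lt_or_ge b c with hbc | hcb
    · exact hu.mono fun p hp => hp.2.trans_lt hbc
    · have hcI : c ∈ Icc a b := ⟨hx.1.trans hc.le, hcb⟩
      filter_upwards [hu, h.eventually_lt_const (hf hx hcI hc)] with p hp hlt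
      exact (hf.lt_iff_lt hp hcI).1 hlt

lemma tendsto_mul_sqrt_zero {γ : Type*} {L : Filter γ} {a b : γ → ℝ}
    (h : Tendsto (fun p => a p ^ 2 * b p) L (𝓝 0)) : Tendsto (fun p => a p * √(b p)) L (𝓝 0) := by
  rw [tendsto_zero_iff_abs_tendsto_zero]
  have hsqrt := h.sqrt
  rw [Real.sqrt_zero] at hsqrt
  refine hsqrt.congr fun p => ?_
  rw [Real.sqrt_mul (sq_nonneg _), Real.sqrt_sq_eq_abs, Function.comp_apply, abs_mul,
    abs_of_nonneg (Real.sqrt_nonneg _)]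

lemma le_of_hasDerivAt_le_of_tendsto {u v u' v' : ℝ → ℝ} {a b c : ℝ}
    (hu : ∀ y ∈ Ioo a b, HasDerivAt u (u' y) y) (hv : ∀ y ∈ Ioo a b, HasDerivAt v (v' y) y)
    (hle : ∀ y ∈ Ioo a b, u' y ≤ v' y) (hua : Tendsto u (𝓝[>] a) (𝓝 c))
    (hva : Tendsto v (𝓝[>] a) (𝓝 c)) {y : ℝ} (hy : y ∈ Ioo a b) : u y ≤ v y := by
  have hd : ∀ x ∈ Ioo a b, HasDerivAt (fun x => u x - v x) (u' x - v' x) x := fun x hx =>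
    (hu x hx).sub (hv x hx)
  have hanti : AntitoneOn (fun x => u x - v x) (Ioo a b) := by
    refine antitoneOn_of_hasDerivWithinAt_nonpos (convex_Ioo a b)
      (fun x hx => (hd x hx).continuousAt.continuousWithinAt) (f' := fun x => u' x - v' x) ?_ ?_ <;>
      rw [interior_Ioo]
    · exact fun x hx => (hd x hx).hasDerivWithinAt
    · exact fun x hx => sub_nonpos.2 (hle x hx)
  have hlim : Tendsto (fun x => u x - v x) (𝓝[>] a) (𝓝 0) := by simpa using hua.sub hva
  refine sub_nonpos.1 (ge_of_tendsto hlim ?_)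
  filter_upwards [Ioo_mem_nhdsGT hy.1] with x hx
  exact hanti ⟨hx.1, hx.2.trans hy.2⟩ hy hx.2.le

lemma tendsto_deriv_of_concaveOn {ι : Type*} {l : Filter ι} {s : Set ℝ} {h : ι → ℝ → ℝ}
    {m : ℝ → ℝ} {x : ℝ} (hs : IsOpen s) (hx : x ∈ s) (hconc : ∀ᶠ k in l, ConcaveOn ℝ s (h k))
    (hdiff : ∀ᶠ k in l, DifferentiableOn ℝ (h k) s) (hm : DifferentiableAt ℝ m x)
    (hlim : ∀ y ∈ s, Tendsto (fun p : ι × ℝ => h p.1 p.2) (l ×ˢ 𝓝 y) (𝓝 (m y))) :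
    Tendsto (fun p : ι × ℝ => deriv (h p.1) p.2) (l ×ˢ 𝓝 x) (𝓝 (deriv m x)) := by
  have hslope : ∀ y ∈ s, y ≠ x →
      Tendsto (fun p : ι × ℝ => slope (h p.1) p.2 y) (l ×ˢ 𝓝 x) (𝓝 (slope m x y)) := by
    intro y hy hyx
    have hfix : Tendsto (fun p : ι × ℝ => h p.1 y) (l ×ˢ 𝓝 x) (𝓝 (m y)) :=
      (hlim y hy).comp (tendsto_fst.prodMk tendsto_const_nhds)
    have hsnd : Tendsto (fun p : ι × ℝ => p.2) (l ×ˢ 𝓝 x) (𝓝 x) := tendsto_snd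
    simp only [slope_def_field]
    exact (hfix.sub (hlim x hx)).div (tendsto_const_nhds.sub hsnd) (sub_ne_zero.2 hyx)
  have hgood : ∀ᶠ p : ι × ℝ in l ×ˢ 𝓝 x,
      (ConcaveOn ℝ s (h p.1) ∧ DifferentiableOn ℝ (h p.1) s) ∧ p.2 ∈ s :=
    (hconc.and hdiff).prod_mk (hs.mem_nhds hx)
  have hsnd : ∀ t : Set ℝ, t ∈ 𝓝 x → ∀ᶠ p : ι × ℝ in l ×ˢ 𝓝 x, p.2 ∈ t := fun t ht =>
    tendsto_snd.eventually ht
  refine tendsto_order.2 ⟨fun c hc => ?_, fun c hc => ?_⟩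
  · obtain ⟨y, ⟨hcy, hys⟩, hxy⟩ :=
      ((((hasDerivAt_iff_tendsto_slope_left_right.1 hm.hasDerivAt).2.eventually_const_lt hc).and
        (mem_nhdsWithin_of_mem_nhds (hs.mem_nhds hx))).and self_mem_nhdsWithin).exists
    filter_upwards [(hslope y hys hxy.ne').eventually_const_lt hcy, hgood,
      hsnd _ (Iio_mem_nhds hxy)] with p hcp hp hpy
    exact hcp.trans_le (hp.1.1.slope_le_deriv hp.2 hys hpy
      (hp.1.2.differentiableAt (hs.mem_nhds hp.2)))
  · obtain ⟨y, ⟨hcy, hys⟩, hxy⟩ :=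
      ((((hasDerivAt_iff_tendsto_slope_left_right.1 hm.hasDerivAt).1.eventually_lt_const hc).and
        (mem_nhdsWithin_of_mem_nhds (hs.mem_nhds hx))).and self_mem_nhdsWithin).exists
    filter_upwards [(hslope y hys hxy.ne).eventually_lt_const hcy, hgood,
      hsnd _ (Ioi_mem_nhds hxy)] with p hcp hp hpy
    rw [slope_comm] at hcp
    exact (hp.1.1.deriv_le_slope hys hp.2 hpy
      (hp.1.2.differentiableAt (hs.mem_nhds hp.2))).trans_lt hcp

lemma const_sub_mem_Ioo {S x : ℝ} (hx : x ∈ Ioo 0 S) : S - x ∈ Ioo 0 S :=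
  ⟨sub_pos.2 hx.2, sub_lt_self S hx.1⟩

lemma const_sub_mem_Icc {S x : ℝ} (hx : x ∈ Icc 0 S) : S - x ∈ Icc 0 S :=
  ⟨sub_nonneg.2 hx.2, sub_le_self S hx.1⟩

lemma tendsto_const_sub_nhdsGT_zero (S : ℝ) : Tendsto (fun z => S - z) (𝓝[>] 0) (𝓝[<] S) :=
  tendsto_nhdsWithin_iff.2
    ⟨((continuous_sub_left S).tendsto' 0 S (sub_zero S)).mono_left nhdsWithin_le_nhds,
      eventually_nhdsWithin_of_forall fun _ hz => sub_lt_self S hz⟩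

lemma tendsto_const_sub_nhdsLT (S : ℝ) : Tendsto (fun z => S - z) (𝓝[<] S) (𝓝[>] 0) :=
  tendsto_nhdsWithin_iff.2
    ⟨((continuous_sub_left S).tendsto' S 0 (sub_self S)).mono_left nhdsWithin_le_nhds,
      eventually_nhdsWithin_of_forall fun _ hz => sub_pos.2 (mem_Iio.1 hz)⟩

lemma tendsto_const_sub_nhdsLE (S : ℝ) : Tendsto (fun z => S - z) (𝓝[≤] S) (𝓝[≥] 0) :=
  tendsto_nhdsWithin_iff.2
    ⟨((continuous_sub_left S).tendsto' S 0 (sub_self S)).mono_left nhdsWithin_le_nhds,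
      eventually_nhdsWithin_of_forall fun _ hz => sub_nonneg.2 (mem_Iic.1 hz)⟩

/-- The map `f` of the paper, `travelTime m z = ∫₀^z √(2 / m r) dr`. -/
noncomputable def travelTime (m : ℝ → ℝ) (z : ℝ) : ℝ :=
  ∫ r in Ioo 0 z, √(2 / m r)

section TravelTime

variable {h m : ℝ → ℝ} {S a b x : ℝ}

lemma travelTime_zero (m : ℝ → ℝ) : travelTime m 0 = 0 := by
  simp [travelTime]

lemma travelTime_eq_intervalIntegral (m : ℝ → ℝ) (hx : 0 ≤ x) :
    travelTime m x = ∫ r in 0..x, √(2 / m r) := by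
  rw [travelTime, ← integral_Ioc_eq_integral_Ioo, ← intervalIntegral.integral_of_le hx]

lemma travelTime_nonneg (m : ℝ → ℝ) (x : ℝ) : 0 ≤ travelTime m x :=
  integral_nonneg fun _ => Real.sqrt_nonneg _

lemma intervalIntegrable_mono_Icc {u : ℝ → ℝ} (hu : IntervalIntegrable u volume 0 S)
    (ha : a ∈ Icc 0 S) (hb : b ∈ Icc 0 S) : IntervalIntegrable u volume a b :=
  hu.mono_set (by
    rw [uIcc_of_le (ha.1.trans ha.2)]
    exact uIcc_subset_Icc ha hb)

lemma travelTime_sub_travelTime (hm : IntervalIntegrable (fun r => √(2 / m r)) volume 0 S)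
    (ha : a ∈ Icc 0 S) (hb : b ∈ Icc 0 S) :
    travelTime m b - travelTime m a = ∫ r in a..b, √(2 / m r) := by
  have h0 : (0 : ℝ) ∈ Icc 0 S := left_mem_Icc.2 (ha.1.trans ha.2)
  rw [travelTime_eq_intervalIntegral m ha.1, travelTime_eq_intervalIntegral m hb.1,
    intervalIntegral.integral_interval_sub_left (intervalIntegrable_mono_Icc hm h0 hb)
      (intervalIntegrable_mono_Icc hm h0 ha)]

lemma strictMonoOn_travelTime (hm : IntervalIntegrable (fun r => √(2 / m r)) volume 0 S)
    (hpos : ∀ z ∈ Ioo 0 S, 0 < m z) : StrictMonoOn (travelTime m) (Icc 0 S) := by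
  intro a ha b hb hab
  rw [← sub_pos, travelTime_sub_travelTime hm ha hb]
  refine intervalIntegral.intervalIntegral_pos_of_pos_on (intervalIntegrable_mono_Icc hm ha hb)
    (fun r hr => ?_) hab
  have := hpos r ⟨ha.1.trans_lt hr.1, hr.2.trans_le hb.2⟩
  positivity

lemma travelTime_sub_travelTime_le (hm : IntervalIntegrable (fun r => √(2 / m r)) volume 0 S)
    (hh : IntervalIntegrable (fun r => √(2 / h r)) volume 0 S) (hpos : ∀ r ∈ Ioo 0 S, 0 < h r)
    (hle : ∀ r ∈ Ioo 0 S, h r ≤ m r) (ha : a ∈ Icc 0 S) (hb : b ∈ Icc 0 S) (hab : a ≤ b) :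
    travelTime m b - travelTime m a ≤ travelTime h b - travelTime h a := by
  rw [travelTime_sub_travelTime hm ha hb, travelTime_sub_travelTime hh ha hb]
  refine intervalIntegral.integral_mono_on_of_le_Ioo hab (intervalIntegrable_mono_Icc hm ha hb)
    (intervalIntegrable_mono_Icc hh ha hb) fun r hr => Real.sqrt_le_sqrt ?_
  have hrS : r ∈ Ioo 0 S := ⟨ha.1.trans_lt hr.1, hr.2.trans_le hb.2⟩
  exact div_le_div_of_nonneg_left zero_le_two (hpos r hrS) (hle r hrS)

lemma travelTime_le_travelTime (hx : 0 ≤ x)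
    (hm : IntervalIntegrable (fun r => √(2 / m r)) volume 0 x)
    (hh : IntervalIntegrable (fun r => √(2 / h r)) volume 0 x) (hpos : ∀ r ∈ Ioo 0 x, 0 < h r)
    (hle : ∀ r ∈ Ioo 0 x, h r ≤ m r) : travelTime m x ≤ travelTime h x := by
  simpa [travelTime_zero] using travelTime_sub_travelTime_le hm hh hpos hle
    (left_mem_Icc.2 hx) (right_mem_Icc.2 hx) hx

lemma travelTime_comp_const_sub (hm : IntervalIntegrable (fun r => √(2 / m r)) volume 0 S)
    (hx : x ∈ Icc 0 S) :
    travelTime (fun z => m (S - z)) x = travelTime m S - travelTime m (S - x) := by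
  have hS : S ∈ Icc 0 S := right_mem_Icc.2 (hx.1.trans hx.2)
  have hSx : S - x ∈ Icc 0 S := const_sub_mem_Icc hx
  rw [travelTime_sub_travelTime hm hSx hS, travelTime_eq_intervalIntegral _ hx.1,
    intervalIntegral.integral_comp_sub_left (fun r => √(2 / m r)) S, sub_zero]

lemma travelTime_const (c : ℝ) (hx : 0 ≤ x) : travelTime (fun _ => c) x = x * √(2 / c) := by
  rw [travelTime_eq_intervalIntegral _ hx, intervalIntegral.integral_const, sub_zero, smul_eq_mul]

lemma sqrt_two_div_const_mul (c : ℝ) {r : ℝ} (hr : 0 < r) :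
    √(2 / (c * r)) = √(2 / c) * r ^ (-(1 / 2) : ℝ) := by
  rw [← div_div, Real.sqrt_div' _ hr.le, Real.rpow_neg hr.le, Real.sqrt_eq_rpow r,
    div_eq_mul_inv]

lemma intervalIntegrable_sqrt_two_div_const_mul (c : ℝ) (hx : 0 ≤ x) :
    IntervalIntegrable (fun r => √(2 / (c * r))) volume 0 x := by
  refine ((intervalIntegral.intervalIntegrable_rpow' (r := -(1 / 2)) (by norm_num)).const_mul
    √(2 / c)).congr fun r hr => ?_
  rw [uIoc_of_le hx] at hr
  exact (sqrt_two_div_const_mul c hr.1).symm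

lemma travelTime_const_mul (c : ℝ) (hx : 0 ≤ x) :
    travelTime (fun r => c * r) x = 2 * √(2 / c) * √x := by
  rw [travelTime, setIntegral_congr_fun measurableSet_Ioo fun r hr => sqrt_two_div_const_mul c hr.1,
    integral_const_mul, ← integral_Ioc_eq_integral_Ioo, ← intervalIntegral.integral_of_le hx,
    integral_rpow (Or.inl (by norm_num)), Real.sqrt_eq_rpow x]
  norm_num
  ring

lemma intervalIntegrable_tent_majorant (c : ℝ) (hS : 0 ≤ S) :
    IntervalIntegrable (fun r => √(2 / (c * r)) + √(2 / (c * (S - r)))) volume 0 S := by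
  have hleft := intervalIntegrable_sqrt_two_div_const_mul c hS
  have hright : IntervalIntegrable (fun r => √(2 / (c * (S - r)))) volume 0 S := by
    simpa using (hleft.comp_sub_left S).symm
  exact hleft.add hright

end TravelTime

lemma rpow_three_quarters_le_of_deriv_sq_mul_le {m p : ℝ → ℝ} {b κ : ℝ} (hκ : 0 ≤ κ)
    (hd : ∀ y ∈ Ioo 0 b, HasDerivAt m (p y) y) (hpos : ∀ y ∈ Ioo 0 b, 0 < m y)
    (hlim : Tendsto m (𝓝[>] 0) (𝓝 0)) (hle : ∀ y ∈ Ioo 0 b, p y ^ 2 * y ≤ κ * √(m y))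
    {y : ℝ} (hy : y ∈ Ioo 0 b) : m y ^ (3 / 4 : ℝ) ≤ 3 / 2 * √κ * √y := by
  -- The hypothesis bounds `(m ^ (3 / 4))' = (3 / 4) p m ^ (-1 / 4)` by `(3 / 4) √κ y ^ (-1 / 2)`.
  have hquarter : ∀ y ∈ Ioo 0 b, √√(m y) = m y ^ (1 / 4 : ℝ) := fun y hy => by
    rw [Real.sqrt_eq_rpow, Real.sqrt_eq_rpow, ← Real.rpow_mul (hpos y hy).le]
    norm_num
  have hbound : ∀ y ∈ Ioo 0 b, p y * √y ≤ √κ * m y ^ (1 / 4 : ℝ) := fun y hy => by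
    rw [← hquarter y hy, ← Real.sqrt_mul hκ]
    refine Real.le_sqrt_of_sq_le ?_
    rw [mul_pow, Real.sq_sqrt hy.1.le]
    exact hle y hy
  refine le_of_hasDerivAt_le_of_tendsto
    (u' := fun y => p y * (3 / 4) * m y ^ ((3 / 4 : ℝ) - 1))
    (v' := fun y => 3 / 2 * √κ * (1 / (2 * √y))) (a := 0) (b := b) (c := 0)
    (fun y hy => (hd y hy).rpow_const (Or.inl (hpos y hy).ne'))
    (fun y hy => (Real.hasDerivAt_sqrt hy.1.ne').const_mul _) (fun y hy => ?_) ?_ ?_ hy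
  · have hy0 : 0 < √y := Real.sqrt_pos.2 hy.1
    have hq : 0 < m y ^ (1 / 4 : ℝ) := Real.rpow_pos_of_pos (hpos y hy) _
    rw [show (3 / 4 : ℝ) - 1 = -(1 / 4) by norm_num, Real.rpow_neg (hpos y hy).le,
      ← div_eq_mul_inv, mul_one_div, div_le_div_iff₀ hq (by positivity)]
    linear_combination 3 / 2 * hbound y hy
  · simpa using hlim.rpow_const (p := 3 / 4) (Or.inr (by norm_num))
  · have hsqrt : Tendsto Real.sqrt (𝓝[>] 0) (𝓝 0) := by
      simpa using (Real.continuous_sqrt.tendsto 0).mono_left nhdsWithin_le_nhds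
    simpa using hsqrt.const_mul (3 / 2 * √κ)

/-- Condition (M) on `m : (0, S) → ℝ`, with `C²` and `m'' ≤ 0` relaxed to differentiability and
concavity, so that the truncated profiles satisfy it as well. -/
structure IsConcaveProfile (S : ℝ) (m : ℝ → ℝ) : Prop where
  pos_right : 0 < S
  concaveOn : ConcaveOn ℝ (Ioo 0 S) m
  differentiableOn : DifferentiableOn ℝ m (Ioo 0 S)
  pos : ∀ z ∈ Ioo 0 S, 0 < m z
  tendsto_left : Tendsto m (𝓝[>] 0) (𝓝 0)
  tendsto_right : Tendsto m (𝓝[<] S) (𝓝 0)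

namespace IsConcaveProfile

variable {S : ℝ} {m : ℝ → ℝ} {x y : ℝ}

lemma of_deriv2_nonpos (hS : 0 < S) (hm : ContDiffOn ℝ 2 m (Ioo 0 S))
    (hpos : ∀ z ∈ Ioo 0 S, 0 < m z) (hderiv2 : ∀ z ∈ Ioo 0 S, deriv (deriv m) z ≤ 0)
    (h0 : Tendsto m (𝓝[>] 0) (𝓝 0)) (hS' : Tendsto m (𝓝[<] S) (𝓝 0)) :
    IsConcaveProfile S m where
  pos_right := hS
  concaveOn := concaveOn_of_deriv2_nonpos' (convex_Ioo 0 S) (hm.differentiableOn two_ne_zero)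
    ((hm.deriv_of_isOpen isOpen_Ioo (by norm_num)).differentiableOn one_ne_zero) hderiv2
  differentiableOn := hm.differentiableOn two_ne_zero
  pos := hpos
  tendsto_left := h0
  tendsto_right := hS'

lemma differentiableAt (P : IsConcaveProfile S m) (hx : x ∈ Ioo 0 S) : DifferentiableAt ℝ m x :=
  P.differentiableOn.differentiableAt (isOpen_Ioo.mem_nhds hx)

lemma half_mem (P : IsConcaveProfile S m) : S / 2 ∈ Ioo 0 S :=
  ⟨half_pos P.pos_right, half_lt_self P.pos_right⟩

lemma reflect (P : IsConcaveProfile S m) : IsConcaveProfile S fun z => m (S - z) where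
  pos_right := P.pos_right
  concaveOn := by
    refine ⟨convex_Ioo 0 S, fun x hx y hy a b ha hb hab => ?_⟩
    have h := P.concaveOn.2 (const_sub_mem_Ioo hx) (const_sub_mem_Ioo hy) ha hb hab
    rwa [show a • (S - x) + b • (S - y) = S - (a • x + b • y) by
      simp only [smul_eq_mul]; linear_combination S * hab] at h
  differentiableOn := P.differentiableOn.comp (by fun_prop) fun _ hz => const_sub_mem_Ioo hz
  pos := fun _ hz => P.pos _ (const_sub_mem_Ioo hz)
  tendsto_left := P.tendsto_right.comp (tendsto_const_sub_nhdsGT_zero S)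
  tendsto_right := P.tendsto_left.comp (tendsto_const_sub_nhdsLT S)

lemma tendsto_slope_nhdsGT_zero (P : IsConcaveProfile S m) (hx : x ∈ Ioo 0 S) :
    Tendsto (fun e => slope m e x) (𝓝[>] 0) (𝓝 (m x / x)) := by
  have hid : Tendsto (fun e : ℝ => e) (𝓝[>] 0) (𝓝 0) := nhdsWithin_le_nhds
  have hlim := (P.tendsto_left.const_sub (m x)).div (hid.const_sub x) (by simpa using hx.1.ne')
  rw [sub_zero, sub_zero] at hlim
  exact hlim.congr fun e => (slope_def_field m e x).symm

lemma antitoneOn_div (P : IsConcaveProfile S m) : AntitoneOn (fun x => m x / x) (Ioo 0 S) := by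
  intro x hx y hy hxy
  refine le_of_tendsto_of_tendsto (P.tendsto_slope_nhdsGT_zero hy)
    (P.tendsto_slope_nhdsGT_zero hx) ?_
  filter_upwards [Ioo_mem_nhdsGT hx.1] with e he
  exact P.concaveOn.antitoneOn_slope_gt ⟨he.1, he.2.trans hx.2⟩ ⟨hx, he.2⟩
    ⟨hy, he.2.trans_le hxy⟩ hxy

lemma deriv_mul_le (P : IsConcaveProfile S m) (hx : x ∈ Ioo 0 S) : deriv m x * x ≤ m x := by
  refine (le_div_iff₀ hx.1).1 (ge_of_tendsto (P.tendsto_slope_nhdsGT_zero hx) ?_)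
  filter_upwards [Ioo_mem_nhdsGT hx.1] with e he
  exact P.concaveOn.deriv_le_slope ⟨he.1, he.2.trans hx.2⟩ hx he.2 (P.differentiableAt hx)

lemma map_add_le (P : IsConcaveProfile S m) (hx : 0 < x) (hy : 0 < y) (hxy : x + y < S) :
    m (x + y) ≤ m x + m y := by
  have hxy0 : 0 < x + y := add_pos hx hy
  have hle : ∀ z, 0 < z → z ≤ x + y → z * (m (x + y) / (x + y)) ≤ m z := fun z hz hzxy =>
    (le_div_iff₀' hz).1 (P.antitoneOn_div ⟨hz, hzxy.trans_lt hxy⟩ ⟨hxy0, hxy⟩ hzxy)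
  calc m (x + y) = x * (m (x + y) / (x + y)) + y * (m (x + y) / (x + y)) := by
        field_simp
    _ ≤ m x + m y := add_le_add (hle x hx (by linarith)) (hle y hy (by linarith))

lemma sqrt_two_div_le_of_le_half (P : IsConcaveProfile S m) {c : ℝ} (hc : 0 < c)
    (hcm : c * (S / 2) ≤ m (S / 2)) (hx : 0 < x) (hxS : x ≤ S / 2) :
    √(2 / m x) ≤ √(2 / (c * x)) := by
  have hcx : c ≤ m x / x := ((le_div_iff₀ P.half_mem.1).2 hcm).trans
    (P.antitoneOn_div ⟨hx, hxS.trans_lt P.half_mem.2⟩ P.half_mem hxS)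
  exact Real.sqrt_le_sqrt
    (div_le_div_of_nonneg_left zero_le_two (mul_pos hc hx) ((le_div_iff₀ hx).1 hcx))

lemma sqrt_two_div_le (P : IsConcaveProfile S m) {c : ℝ} (hc : 0 < c)
    (hcm : c * (S / 2) ≤ m (S / 2)) (hx : x ∈ Ioo 0 S) :
    √(2 / m x) ≤ √(2 / (c * x)) + √(2 / (c * (S - x))) := by
  rcases le_total x (S / 2) with h | h
  · exact le_add_of_le_of_nonneg (P.sqrt_two_div_le_of_le_half hc hcm hx.1 h) (Real.sqrt_nonneg _)
  · refine le_add_of_nonneg_of_le (Real.sqrt_nonneg _) ?_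
    simpa using P.reflect.sqrt_two_div_le_of_le_half hc (by rwa [sub_half])
      (const_sub_mem_Ioo hx).1 (by linarith)

lemma aestronglyMeasurable_sqrt_two_div (P : IsConcaveProfile S m) :
    AEStronglyMeasurable (fun r => √(2 / m r)) (volume.restrict (Ioo 0 S)) :=
  (continuousOn_const.div P.differentiableOn.continuousOn fun z hz =>
    (P.pos z hz).ne').sqrt.aestronglyMeasurable measurableSet_Ioo

lemma intervalIntegrable (P : IsConcaveProfile S m) :
    IntervalIntegrable (fun r => √(2 / m r)) volume 0 S := by
  have hhalf := P.half_mem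
  have hc : 0 < m (S / 2) / (S / 2) := div_pos (P.pos _ hhalf) hhalf.1
  rw [intervalIntegrable_iff_integrableOn_Ioo_of_le P.pos_right.le]
  refine ((intervalIntegrable_iff_integrableOn_Ioo_of_le P.pos_right.le).1
    (intervalIntegrable_tent_majorant (m (S / 2) / (S / 2)) P.pos_right.le)).mono' ?_ ?_
  · exact P.aestronglyMeasurable_sqrt_two_div
  · refine (ae_restrict_mem measurableSet_Ioo).mono fun r hr => ?_
    rw [Real.norm_of_nonneg (Real.sqrt_nonneg _)]
    exact P.sqrt_two_div_le hc (div_mul_cancel₀ _ hhalf.1.ne').le hr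

lemma intervalIntegrable_of_mem (P : IsConcaveProfile S m) (hx : x ∈ Icc 0 S) :
    IntervalIntegrable (fun r => √(2 / m r)) volume 0 x :=
  intervalIntegrable_mono_Icc P.intervalIntegrable (left_mem_Icc.2 P.pos_right.le) hx

lemma strictMonoOn_travelTime (P : IsConcaveProfile S m) :
    StrictMonoOn (travelTime m) (Icc 0 S) :=
  _root_.strictMonoOn_travelTime P.intervalIntegrable P.pos

lemma eventually_deriv_pos (P : IsConcaveProfile S m) : ∀ᶠ z in 𝓝[>] 0, 0 < deriv m z := by
  have hhalf := P.half_mem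
  filter_upwards [P.tendsto_left.eventually_lt_const (P.pos _ hhalf), Ioo_mem_nhdsGT hhalf.1]
    with z hz hzI
  have hzS : z ∈ Ioo 0 S := ⟨hzI.1, hzI.2.trans hhalf.2⟩
  refine lt_of_lt_of_le ?_
    (P.concaveOn.slope_le_deriv hzS hhalf hzI.2 (P.differentiableAt hzS))
  rw [slope_def_field]
  exact div_pos (sub_pos.2 hz) (sub_pos.2 hzI.2)

lemma le_of_deriv_pos (P : IsConcaveProfile S m) (hx : 0 < x) (hy : y ∈ Ioo 0 S) (hxy : x < y)
    (hd : 0 < deriv m y) : m x ≤ m y := by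
  have hslope := hd.trans_le
    (P.concaveOn.deriv_le_slope ⟨hx, hxy.trans hy.2⟩ hy hxy (P.differentiableAt hy))
  rw [slope_def_field, div_pos_iff_of_pos_right (sub_pos.2 hxy), sub_pos] at hslope
  exact hslope.le

lemma mul_sqrt_le_travelTime (P : IsConcaveProfile S m) (hx : x ∈ Ioo 0 S)
    (hd : 0 < deriv m x) : x * √(2 / m x) ≤ travelTime m x := by
  rw [← travelTime_const (m x) hx.1.le]
  exact travelTime_le_travelTime hx.1.le intervalIntegrable_const
    (P.intervalIntegrable_of_mem (Ioo_subset_Icc_self hx))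
    (fun r hr => P.pos r ⟨hr.1, hr.2.trans hx.2⟩) fun r hr => P.le_of_deriv_pos hr.1 hx hr.2 hd

lemma deriv_sq_mul_travelTime_le (P : IsConcaveProfile S m) (hx : x ∈ Ioo 0 S)
    (hd : 0 < deriv m x) :
    deriv m x ^ 2 * travelTime m x ≤ √(8 * (deriv m x ^ 3 * x)) := by
  have hlinear : ∀ r ∈ Ioo 0 x, deriv m x * r ≤ m r := fun r hr =>
    (le_div_iff₀ hr.1).1 (((le_div_iff₀ hx.1).2 (P.deriv_mul_le hx)).trans
      (P.antitoneOn_div ⟨hr.1, hr.2.trans hx.2⟩ hx hr.2.le))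
  have htime : travelTime m x ≤ 2 * √(2 / deriv m x) * √x := by
    rw [← travelTime_const_mul _ hx.1.le]
    exact travelTime_le_travelTime hx.1.le (P.intervalIntegrable_of_mem (Ioo_subset_Icc_self hx))
      (intervalIntegrable_sqrt_two_div_const_mul _ hx.1.le) (fun r hr => mul_pos hd hr.1) hlinear
  have hx0 := hx.1.le
  refine Real.le_sqrt_of_sq_le ?_
  calc (deriv m x ^ 2 * travelTime m x) ^ 2
      ≤ (deriv m x ^ 2 * (2 * √(2 / deriv m x) * √x)) ^ 2 := by
        have := travelTime_nonneg m x
        gcongr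
    _ = deriv m x ^ 4 * 4 * √(2 / deriv m x) ^ 2 * √x ^ 2 := by ring
    _ = 8 * (deriv m x ^ 3 * x) := by
        rw [Real.sq_sqrt (by positivity), Real.sq_sqrt hx0]
        field_simp
        ring

lemma deriv_sq_mul_le_sqrt (P : IsConcaveProfile S m) {κ : ℝ} (hx : x ∈ Ioo 0 S)
    (hd : 0 < deriv m x) (h : deriv m x ^ 2 * travelTime m x ≤ κ) :
    deriv m x ^ 2 * x ≤ κ * √(m x) := by
  have hsqrt : 0 < √(m x) := Real.sqrt_pos.2 (P.pos x hx)
  rw [← div_le_iff₀ hsqrt]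
  refine le_trans ?_ h
  calc deriv m x ^ 2 * x / √(m x) = deriv m x ^ 2 * (x * √(1 / m x)) := by
        rw [one_div, Real.sqrt_inv, div_eq_mul_inv, mul_assoc]
    _ ≤ deriv m x ^ 2 * (x * √(2 / m x)) := by
        have := hx.1
        have := P.pos x hx
        gcongr
        exact one_le_two
    _ ≤ deriv m x ^ 2 * travelTime m x := by
        gcongr
        exact P.mul_sqrt_le_travelTime hx hd

lemma deriv_cube_mul_le (P : IsConcaveProfile S m) {b κ : ℝ} (hbS : b ≤ S) (hκ : 0 ≤ κ)
    (hd : ∀ z ∈ Ioo 0 b, 0 < deriv m z)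
    (h : ∀ z ∈ Ioo 0 b, deriv m z ^ 2 * travelTime m z ≤ κ) (hx : x ∈ Ioo 0 b) :
    deriv m x ^ 3 * x ≤ (3 / 2) ^ 4 * κ ^ 2 := by
  have hbI : Ioo 0 b ⊆ Ioo 0 S := Ioo_subset_Ioo_right hbS
  have hm0 := (P.pos x (hbI hx)).le
  have hx0 := hx.1
  have hdx := hd x hx
  have hgrowth : m x ^ (3 / 4 : ℝ) ≤ 3 / 2 * √κ * √x :=
    rpow_three_quarters_le_of_deriv_sq_mul_le hκ
      (fun z hz => (P.differentiableAt (hbI hz)).hasDerivAt) (fun z hz => P.pos z (hbI hz))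
      P.tendsto_left (fun z hz => P.deriv_sq_mul_le_sqrt (hbI hz) (hd z hz) (h z hz)) hx
  refine le_of_mul_le_mul_right ?_ (pow_pos hx0 2)
  calc deriv m x ^ 3 * x * x ^ 2 = (deriv m x * x) ^ 3 := by ring
    _ ≤ m x ^ 3 := by
        gcongr
        exact P.deriv_mul_le (hbI hx)
    _ = (m x ^ (3 / 4 : ℝ)) ^ 4 := by
        rw [← Real.rpow_mul_natCast hm0, ← Real.rpow_natCast]
        norm_num
    _ ≤ (3 / 2 * √κ * √x) ^ 4 := by gcongr
    _ = (3 / 2) ^ 4 * (√κ ^ 2) ^ 2 * (√x ^ 2) ^ 2 := by ring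
    _ = (3 / 2) ^ 4 * κ ^ 2 * x ^ 2 := by rw [Real.sq_sqrt hκ, Real.sq_sqrt hx0.le]

lemma tendsto_deriv_cube_mul (P : IsConcaveProfile S m)
    (h : Tendsto (fun z => deriv m z ^ 2 * travelTime m z) (𝓝[>] 0) (𝓝 0)) :
    Tendsto (fun z => deriv m z ^ 3 * z) (𝓝[>] 0) (𝓝 0) := by
  refine tendsto_order.2 ⟨fun c hc => ?_, fun c hc => ?_⟩
  · filter_upwards [P.eventually_deriv_pos, self_mem_nhdsWithin] with z hd hz
    exact hc.trans (mul_pos (pow_pos hd 3) hz)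
  · have hκ : 0 < √c / 3 := by positivity
    obtain ⟨b, hbS, hb⟩ := (mem_nhdsGT_iff_exists_mem_Ioc_Ioo_subset P.pos_right).1
      (P.eventually_deriv_pos.and (h.eventually_lt_const hκ))
    filter_upwards [Ioo_mem_nhdsGT hbS.1] with z hz
    calc deriv m z ^ 3 * z ≤ (3 / 2) ^ 4 * (√c / 3) ^ 2 :=
          P.deriv_cube_mul_le hbS.2 hκ.le (fun z hz => (hb hz).1) (fun z hz => (hb hz).2.le) hz
      _ = 9 / 16 * c := by
          rw [div_pow √c, Real.sq_sqrt hc.le]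
          ring
      _ < c := by linarith

lemma deriv_sq_mul_travelTime_reflect (P : IsConcaveProfile S m) (hx : x ∈ Icc 0 S) :
    deriv (fun z => m (S - z)) x ^ 2 * travelTime (fun z => m (S - z)) x =
      deriv m (S - x) ^ 2 * (travelTime m S - travelTime m (S - x)) := by
  rw [deriv_comp_const_sub, neg_sq, travelTime_comp_const_sub P.intervalIntegrable hx]

end IsConcaveProfile

/-- `g` is the map `f⁻¹ : [0, f(S)] → [0, S]` of the paper, where `f = travelTime m`. Only the
right-inverse property is recorded, since `f` is injective on `[0, S]`. -/
def IsTravelTimeInverse (S : ℝ) (m g : ℝ → ℝ) : Prop :=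
  ∀ w ∈ Icc 0 (travelTime m S), g w ∈ Icc 0 S ∧ travelTime m (g w) = w

/-- The map `G̃` of the paper, for a profile `m` and the inverse `g` of its travel time. The square
root vanishes at `w = 0` and `w = travelTime m S`, so `G̃` is `0` there whatever `deriv` returns. -/
noncomputable def weightedSlope (S : ℝ) (m g : ℝ → ℝ) (w : ℝ) : ℝ :=
  deriv m (g w) * √(w * (travelTime m S - w))

/-- Convergence of concave profiles from below that is strong enough for `weightedSlope` to
converge uniformly: local uniform convergence (expressed by joint limits) inside `(0, S)`, and
smallness of `(h k)' ^ 2 * f` and `(h k)' ^ 2 * (f S - f)` near `0` and `S`, uniformly in `k`. -/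
structure TendstoConcaveProfile {ι : Type*} (l : Filter ι) (S : ℝ) (h : ι → ℝ → ℝ) (m : ℝ → ℝ) :
    Prop where
  profile : IsConcaveProfile S m
  eventually_profile : ∀ᶠ k in l, IsConcaveProfile S (h k)
  eventually_le : ∀ᶠ k in l, ∀ x ∈ Ioo 0 S, h k x ≤ m x
  tendsto : ∀ x ∈ Ioo 0 S, Tendsto (fun p : ι × ℝ => h p.1 p.2) (l ×ˢ 𝓝 x) (𝓝 (m x))
  tendsto_left : Tendsto (fun p : ι × ℝ => deriv (h p.1) p.2 ^ 2 * travelTime (h p.1) p.2)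
    (l ×ˢ 𝓝[≥] 0) (𝓝 0)
  tendsto_right : Tendsto (fun p : ι × ℝ => deriv (h p.1) p.2 ^ 2 *
    (travelTime (h p.1) S - travelTime (h p.1) p.2)) (l ×ˢ 𝓝[≤] S) (𝓝 0)

namespace TendstoConcaveProfile

variable {ι : Type*} {l : Filter ι} {S : ℝ} {h : ι → ℝ → ℝ} {m : ℝ → ℝ}

lemma tendsto_apply (H : TendstoConcaveProfile l S h m) {x : ℝ} (hx : x ∈ Ioo 0 S) :
    Tendsto (fun k => h k x) l (𝓝 (m x)) :=
  (H.tendsto x hx).comp (tendsto_id.prodMk tendsto_const_nhds)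

lemma tendsto_travelTime_right [l.IsCountablyGenerated] (H : TendstoConcaveProfile l S h m) :
    Tendsto (fun k => travelTime (h k) S) l (𝓝 (travelTime m S)) := by
  have hhalf := H.profile.half_mem
  have hmhalf := H.profile.pos _ hhalf
  set c := m (S / 2) / S with hc
  have hc0 : 0 < c := div_pos hmhalf H.profile.pos_right
  have hcm : c * (S / 2) < m (S / 2) := by
    rw [hc, ← mul_div_assoc, div_mul_cancel₀ _ H.profile.pos_right.ne']
    exact half_lt_self hmhalf
  refine tendsto_integral_filter_of_dominated_convergence
    (fun r => √(2 / (c * r)) + √(2 / (c * (S - r)))) ?_ ?_ ?_ ?_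
  · exact H.eventually_profile.mono fun k hk => hk.aestronglyMeasurable_sqrt_two_div
  · filter_upwards [H.eventually_profile, (H.tendsto_apply hhalf).eventually_const_lt hcm]
      with k hk hck
    refine (ae_restrict_mem measurableSet_Ioo).mono fun r hr => ?_
    rw [Real.norm_of_nonneg (Real.sqrt_nonneg _)]
    exact hk.sqrt_two_div_le hc0 hck.le hr
  · exact (intervalIntegrable_iff_integrableOn_Ioo_of_le H.profile.pos_right.le).1
      (intervalIntegrable_tent_majorant c H.profile.pos_right.le)
  · refine (ae_restrict_mem measurableSet_Ioo).mono fun r hr => ?_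
    exact (tendsto_const_nhds.div (H.tendsto_apply hr) (H.profile.pos r hr).ne').sqrt

lemma eventually_travelTime_sub_le (H : TendstoConcaveProfile l S h m) :
    ∀ᶠ k in l, ∀ a ∈ Icc 0 S, ∀ b ∈ Icc 0 S, a ≤ b →
      travelTime m b - travelTime m a ≤ travelTime (h k) b - travelTime (h k) a := by
  filter_upwards [H.eventually_profile, H.eventually_le] with k hk hle a ha b hb hab
  exact travelTime_sub_travelTime_le H.profile.intervalIntegrable hk.intervalIntegrable hk.pos hle
    ha hb hab

lemma eventually_abs_travelTime_sub_le (H : TendstoConcaveProfile l S h m) :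
    ∀ᶠ k in l, ∀ x ∈ Icc 0 S,
      |travelTime (h k) x - travelTime m x| ≤ travelTime (h k) S - travelTime m S := by
  filter_upwards [H.eventually_travelTime_sub_le] with k hk x hx
  have hS := H.profile.pos_right.le
  have hleft := hk 0 (left_mem_Icc.2 hS) x hx hx.1
  have hright := hk x hx S (right_mem_Icc.2 hS) hx.2
  rw [travelTime_zero, travelTime_zero] at hleft
  rw [abs_of_nonneg] <;> linarith

lemma eventually_travelTime_le (H : TendstoConcaveProfile l S h m) :
    ∀ᶠ k in l, travelTime m S ≤ travelTime (h k) S := by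
  filter_upwards [H.eventually_abs_travelTime_sub_le] with k hk
  exact sub_nonneg.1 ((abs_nonneg _).trans (hk S (right_mem_Icc.2 H.profile.pos_right.le)))

section Inverse

variable {G : ι → ℝ → ℝ} {g : ℝ → ℝ} {w : ℝ}

lemma eventually_inverse (H : TendstoConcaveProfile l S h m)
    (hG : ∀ k, IsTravelTimeInverse S (h k) (G k)) (w : ℝ) :
    ∀ᶠ p : ι × ℝ in l ×ˢ 𝓝[Icc 0 (travelTime m S)] w,
      G p.1 p.2 ∈ Icc 0 S ∧ travelTime (h p.1) (G p.1 p.2) = p.2 :=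
  (H.eventually_travelTime_le.prod_mk self_mem_nhdsWithin).mono fun p hp =>
    hG p.1 p.2 ⟨hp.2.1, hp.2.2.trans hp.1⟩

lemma tendsto_inverse [l.IsCountablyGenerated] (H : TendstoConcaveProfile l S h m)
    (hg : IsTravelTimeInverse S m g) (hG : ∀ k, IsTravelTimeInverse S (h k) (G k))
    (hw : w ∈ Icc 0 (travelTime m S)) :
    Tendsto (fun p : ι × ℝ => G p.1 p.2) (l ×ˢ 𝓝[Icc 0 (travelTime m S)] w) (𝓝 (g w)) := by
  refine tendsto_of_strictMonoOn_of_tendsto_comp H.profile.strictMonoOn_travelTime (hg w hw).1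
    ((H.eventually_inverse hG w).mono fun p hp => hp.1) ?_
  have hsnd : Tendsto (fun p : ι × ℝ => p.2) (l ×ˢ 𝓝[Icc 0 (travelTime m S)] w) (𝓝 w) :=
    tendsto_snd.mono_right nhdsWithin_le_nhds
  have hgap : Tendsto (fun p : ι × ℝ => travelTime (h p.1) S - travelTime m S)
      (l ×ˢ 𝓝[Icc 0 (travelTime m S)] w) (𝓝 0) := by
    simpa using (H.tendsto_travelTime_right.comp tendsto_fst).sub_const (travelTime m S)
  have hdiff : Tendsto (fun p : ι × ℝ => p.2 - travelTime m (G p.1 p.2))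
      (l ×ˢ 𝓝[Icc 0 (travelTime m S)] w) (𝓝 0) := by
    refine squeeze_zero_norm' ?_ hgap
    filter_upwards [tendsto_fst.eventually H.eventually_abs_travelTime_sub_le,
      H.eventually_inverse hG w] with p hp hinv
    simpa [hinv.2] using hp _ hinv.1
  rw [(hg w hw).2]
  simpa using hsnd.sub hdiff

lemma tendsto_weightedSlope [l.IsCountablyGenerated] (H : TendstoConcaveProfile l S h m)
    (hg : IsTravelTimeInverse S m g) (hG : ∀ k, IsTravelTimeInverse S (h k) (G k))
    (hw : w ∈ Icc 0 (travelTime m S)) :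
    Tendsto (fun p : ι × ℝ => weightedSlope S (h p.1) (G p.1) p.2)
      (l ×ˢ 𝓝[Icc 0 (travelTime m S)] w) (𝓝 (weightedSlope S m g w)) := by
  set L := l ×ˢ 𝓝[Icc 0 (travelTime m S)] w
  have hsnd : Tendsto (fun p : ι × ℝ => p.2) L (𝓝 w) :=
    tendsto_snd.mono_right nhdsWithin_le_nhds
  have htotal : Tendsto (fun p : ι × ℝ => travelTime (h p.1) S - p.2) L
      (𝓝 (travelTime m S - w)) := (H.tendsto_travelTime_right.comp tendsto_fst).sub hsnd
  have hu := H.tendsto_inverse hg hG hw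
  have hinv := H.eventually_inverse hG w
  have hwithin : ∀ s, Icc 0 S ⊆ s → Tendsto (fun p : ι × ℝ => G p.1 p.2) L (𝓝[s] g w) :=
    fun s hs => tendsto_nhdsWithin_iff.2 ⟨hu, hinv.mono fun p hp => hs hp.1⟩
  obtain ⟨hgw, hwg⟩ := hg w hw
  rcases eq_endpoints_or_mem_Ioo_of_mem_Icc hgw with hg0 | hgS | hgI
  · have hw0 : w = 0 := by rw [← hwg, hg0, travelTime_zero]
    have hzero : weightedSlope S m g w = 0 := by simp [weightedSlope, hw0]
    have hboundary := (H.tendsto_left.comp (tendsto_fst.prodMk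
      (hg0 ▸ hwithin (Ici 0) Icc_subset_Ici_self))).mul htotal
    rw [zero_mul] at hboundary
    rw [hzero]
    refine tendsto_mul_sqrt_zero (hboundary.congr' (hinv.mono fun p hp => ?_))
    simp only [Function.comp_apply, hp.2, mul_assoc]
  · have hwS : w = travelTime m S := by rw [← hwg, hgS]
    have hzero : weightedSlope S m g w = 0 := by simp [weightedSlope, hwS]
    have hboundary := (H.tendsto_right.comp (tendsto_fst.prodMk
      (hgS ▸ hwithin (Iic S) Icc_subset_Iic_self))).mul hsnd
    rw [zero_mul] at hboundary
    rw [hzero]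
    refine tendsto_mul_sqrt_zero (hboundary.congr' (hinv.mono fun p hp => ?_))
    simp only [Function.comp_apply, hp.2]
    ring
  · have hderiv := tendsto_deriv_of_concaveOn isOpen_Ioo hgI
      (H.eventually_profile.mono fun k hk => hk.concaveOn)
      (H.eventually_profile.mono fun k hk => hk.differentiableOn)
      (H.profile.differentiableAt hgI) H.tendsto
    exact (hderiv.comp (tendsto_fst.prodMk hu)).mul (hsnd.mul htotal).sqrt

end Inverse

end TendstoConcaveProfile

/-- The affine map taking `[0, S]` onto `[z₁, z₂]`. -/
noncomputable def stretch (S z₁ z₂ x : ℝ) : ℝ :=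
  z₁ + (z₂ - z₁) * x / S

section Stretch

variable {S z₁ z₂ x : ℝ}

lemma hasDerivAt_stretch (S z₁ z₂ x : ℝ) : HasDerivAt (stretch S z₁ z₂) ((z₂ - z₁) / S) x := by
  have h := (((hasDerivAt_id' x).const_mul (z₂ - z₁)).div_const S).const_add z₁
  rwa [mul_one] at h

lemma stretch_zero (S z₁ z₂ : ℝ) : stretch S z₁ z₂ 0 = z₁ := by
  simp [stretch]

lemma stretch_self (hS : S ≠ 0) (z₁ z₂ : ℝ) : stretch S z₁ z₂ S = z₂ := by
  simp [stretch, hS]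

lemma strictMono_stretch (hS : 0 < S) (hz : z₁ < z₂) : StrictMono (stretch S z₁ z₂) := by
  intro x y hxy
  have := sub_pos.2 hz
  unfold stretch
  gcongr

lemma stretch_mem_Ioo (hz : z₁ < z₂) (hx : x ∈ Ioo 0 S) : stretch S z₁ z₂ x ∈ Ioo z₁ z₂ := by
  have hS := hx.1.trans hx.2
  have hmono := strictMono_stretch hS hz
  exact ⟨(stretch_zero S z₁ z₂).symm.trans_lt (hmono hx.1),
    (hmono hx.2).trans_eq (stretch_self hS.ne' z₁ z₂)⟩

lemma stretch_reflect (hS : S ≠ 0) (z₁ z₂ x : ℝ) :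
    stretch S (S - z₂) (S - z₁) x = S - stretch S z₁ z₂ (S - x) := by
  unfold stretch
  field_simp
  ring

lemma stretch_convexCombination (S z₁ z₂ x y : ℝ) {a b : ℝ} (hab : a + b = 1) :
    stretch S z₁ z₂ (a • x + b • y) = a • stretch S z₁ z₂ x + b • stretch S z₁ z₂ y := by
  simp only [stretch, smul_eq_mul]
  linear_combination -z₁ * hab

lemma tendsto_stretch {ι : Type*} {l : Filter ι} {z₁ z₂ : ι → ℝ} (hS : S ≠ 0)
    (hz₁ : Tendsto z₁ l (𝓝 0)) (hz₂ : Tendsto z₂ l (𝓝 S)) (x : ℝ) :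
    Tendsto (fun p : ι × ℝ => stretch S (z₁ p.1) (z₂ p.1) p.2) (l ×ˢ 𝓝 x) (𝓝 x) := by
  have hz₁' := hz₁.comp (tendsto_fst (f := l) (g := 𝓝 x))
  have hz₂' := hz₂.comp (tendsto_fst (f := l) (g := 𝓝 x))
  have hlim := hz₁'.add (((hz₂'.sub hz₁').mul (tendsto_snd (f := l) (g := 𝓝 x))).div_const S)
  rwa [sub_zero, mul_div_cancel_left₀ x hS, zero_add] at hlim

end Stretch

/-- The profile `m_δ` of the paper, where `z₁ < z₂` are the solutions of `m z = δ`. -/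
noncomputable def truncatedProfile (S : ℝ) (m : ℝ → ℝ) (δ z₁ z₂ x : ℝ) : ℝ :=
  m (stretch S z₁ z₂ x) - δ

/-- `z₁ < z₂` are two points of `(0, S)` at which `m` takes the value `δ`. -/
structure IsLevelPair (S : ℝ) (m : ℝ → ℝ) (δ z₁ z₂ : ℝ) : Prop where
  left_mem : z₁ ∈ Ioo 0 S
  right_mem : z₂ ∈ Ioo 0 S
  lt : z₁ < z₂
  eq_left : m z₁ = δ
  eq_right : m z₂ = δ

lemma truncatedProfile_reflect {S : ℝ} (hS : S ≠ 0) (m : ℝ → ℝ) (δ z₁ z₂ : ℝ) :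
    truncatedProfile S (fun z => m (S - z)) δ (S - z₂) (S - z₁) =
      fun x => truncatedProfile S m δ z₁ z₂ (S - x) := by
  funext x
  rw [truncatedProfile, truncatedProfile, stretch_reflect hS, sub_sub_cancel]

namespace IsLevelPair

variable {S δ z₁ z₂ e x : ℝ} {m : ℝ → ℝ}

lemma reflect (hL : IsLevelPair S m δ z₁ z₂) :
    IsLevelPair S (fun z => m (S - z)) δ (S - z₂) (S - z₁) where
  left_mem := const_sub_mem_Ioo hL.right_mem
  right_mem := const_sub_mem_Ioo hL.left_mem
  lt := sub_lt_sub_left hL.lt S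
  eq_left := by rw [sub_sub_cancel, hL.eq_right]
  eq_right := by rw [sub_sub_cancel, hL.eq_left]

lemma slope_mem (hL : IsLevelPair S m δ z₁ z₂) : (z₂ - z₁) / S ∈ Ioc 0 1 := by
  have hS := hL.left_mem.1.trans hL.left_mem.2
  exact ⟨div_pos (sub_pos.2 hL.lt) hS,
    (div_le_one hS).2 ((sub_le_self _ hL.left_mem.1.le).trans hL.right_mem.2.le)⟩

lemma stretch_mem (hL : IsLevelPair S m δ z₁ z₂) (hx : x ∈ Icc 0 S) :
    stretch S z₁ z₂ x ∈ Ioo 0 S := by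
  have hS := hL.left_mem.1.trans hL.left_mem.2
  have hmono := (strictMono_stretch hS hL.lt).monotone
  exact ⟨hL.left_mem.1.trans_le ((stretch_zero S z₁ z₂).symm.trans_le (hmono hx.1)),
    ((hmono hx.2).trans_eq (stretch_self hS.ne' z₁ z₂)).trans_lt hL.right_mem.2⟩

lemma stretch_le_add (hL : IsLevelPair S m δ z₁ z₂) (hx : 0 ≤ x) :
    stretch S z₁ z₂ x ≤ z₁ + x := by
  rw [stretch, mul_div_right_comm]
  gcongr
  exact mul_le_of_le_one_left hx hL.slope_mem.2

lemma mem_Ioo_of_lt (hL : IsLevelPair S m δ z₁ z₂) (hm : ConcaveOn ℝ (Ioo 0 S) m)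
    (he : e ∈ Ioo 0 S) (hδe : δ < m e) : e ∈ Ioo z₁ z₂ := by
  refine ⟨lt_of_not_ge fun hez => ?_, lt_of_not_ge fun hze => ?_⟩
  · have hle := hm.left_le_of_le_right'' he hL.right_mem hez hL.lt
      (hL.eq_left.trans hL.eq_right.symm).le
    exact (hle.trans_eq hL.eq_left).not_gt hδe
  · have hle := hm.right_le_of_le_left'' hL.left_mem he hL.lt hze
      (hL.eq_right.trans hL.eq_left.symm).le
    exact (hle.trans_eq hL.eq_right).not_gt hδe

lemma lt_of_mem_Ioo (hL : IsLevelPair S m δ z₁ z₂) (hm : ConcaveOn ℝ (Ioo 0 S) m)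
    (he : e ∈ Ioo 0 S) (hδe : δ < m e) (hx : x ∈ Ioo z₁ z₂) : δ < m x := by
  by_contra! hxδ
  refine hδe.not_ge (le_trans ?_ hxδ)
  rcases le_total x e with hxe | hex
  · exact hm.right_le_of_le_left'' hL.left_mem he hx.1 hxe (hxδ.trans_eq hL.eq_left.symm)
  · exact hm.left_le_of_le_right'' he hL.right_mem hex hx.2 (hxδ.trans_eq hL.eq_right.symm)

lemma hasDerivAt_truncatedProfile (hL : IsLevelPair S m δ z₁ z₂)
    (hm : DifferentiableOn ℝ m (Ioo 0 S)) (hx : x ∈ Icc 0 S) :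
    HasDerivAt (truncatedProfile S m δ z₁ z₂)
      ((z₂ - z₁) / S * deriv m (stretch S z₁ z₂ x)) x := by
  have hmx := hm.hasDerivAt (isOpen_Ioo.mem_nhds (hL.stretch_mem hx))
  rw [mul_comm]
  exact (hmx.comp x (hasDerivAt_stretch S z₁ z₂ x)).sub_const δ

lemma concaveOn_truncatedProfile (hL : IsLevelPair S m δ z₁ z₂)
    (hm : ConcaveOn ℝ (Ioo 0 S) m) : ConcaveOn ℝ (Ioo 0 S) (truncatedProfile S m δ z₁ z₂) := by
  refine ⟨convex_Ioo 0 S, fun x hx y hy a b ha hb hab => ?_⟩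
  have h := hm.2 (hL.stretch_mem (Ioo_subset_Icc_self hx))
    (hL.stretch_mem (Ioo_subset_Icc_self hy)) ha hb hab
  rw [← stretch_convexCombination S z₁ z₂ x y hab] at h
  simp only [truncatedProfile, smul_eq_mul] at h ⊢
  linear_combination h - δ * hab

lemma isConcaveProfile_truncatedProfile (hL : IsLevelPair S m δ z₁ z₂)
    (P : IsConcaveProfile S m) (he : e ∈ Ioo 0 S) (hδe : δ < m e) :
    IsConcaveProfile S (truncatedProfile S m δ z₁ z₂) := by
  have hcont : ∀ x ∈ Icc 0 S, ContinuousAt (truncatedProfile S m δ z₁ z₂) x := fun x hx =>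
    (hL.hasDerivAt_truncatedProfile P.differentiableOn hx).continuousAt
  have hS := P.pos_right
  exact
  { pos_right := hS
    concaveOn := hL.concaveOn_truncatedProfile P.concaveOn
    differentiableOn := fun x hx => (hL.hasDerivAt_truncatedProfile P.differentiableOn
      (Ioo_subset_Icc_self hx)).differentiableAt.differentiableWithinAt
    pos := fun x hx => sub_pos.2
      (hL.lt_of_mem_Ioo P.concaveOn he hδe (stretch_mem_Ioo hL.lt hx))
    tendsto_left := by
      have h0 : truncatedProfile S m δ z₁ z₂ 0 = 0 := by
        rw [truncatedProfile, stretch_zero, hL.eq_left, sub_self]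
      simpa only [h0] using
        (hcont 0 (left_mem_Icc.2 hS.le)).tendsto.mono_left nhdsWithin_le_nhds
    tendsto_right := by
      have hSS : truncatedProfile S m δ z₁ z₂ S = 0 := by
        rw [truncatedProfile, stretch_self hS.ne', hL.eq_right, sub_self]
      simpa only [hSS] using
        (hcont S (right_mem_Icc.2 hS.le)).tendsto.mono_left nhdsWithin_le_nhds }

lemma truncatedProfile_le_of_le_stretch (hL : IsLevelPair S m δ z₁ z₂) (P : IsConcaveProfile S m)
    (hx : x ∈ Ioo 0 S) (hxy : x ≤ stretch S z₁ z₂ x) : truncatedProfile S m δ z₁ z₂ x ≤ m x := by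
  rw [truncatedProfile, sub_le_iff_le_add]
  set y := stretch S z₁ z₂ x
  rcases hxy.eq_or_lt with hxy | hxy
  · rw [← hxy, ← hL.eq_left]
    exact le_add_of_nonneg_right (P.pos z₁ hL.left_mem).le
  · have hyS : y < S := (hL.stretch_mem (Ioo_subset_Icc_self hx)).2
    have hyx : y - x ≤ z₁ := sub_le_iff_le_add.2 (hL.stretch_le_add hx.1.le)
    have hlow : m (y - x) ≤ δ := le_of_not_gt fun hlt => hyx.not_gt
      (hL.mem_Ioo_of_lt P.concaveOn ⟨sub_pos.2 hxy, hyx.trans_lt hL.left_mem.2⟩ hlt).1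
    calc m y = m (x + (y - x)) := by rw [add_sub_cancel]
      _ ≤ m x + m (y - x) := P.map_add_le hx.1 (sub_pos.2 hxy) (by rwa [add_sub_cancel])
      _ ≤ m x + δ := by gcongr

lemma truncatedProfile_le (hL : IsLevelPair S m δ z₁ z₂) (P : IsConcaveProfile S m)
    (hx : x ∈ Ioo 0 S) : truncatedProfile S m δ z₁ z₂ x ≤ m x := by
  rcases le_total x (stretch S z₁ z₂ x) with h | h
  · exact hL.truncatedProfile_le_of_le_stretch P hx h
  · have hS := P.pos_right.ne'
    have hreflect := hL.reflect.truncatedProfile_le_of_le_stretch P.reflect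
      (const_sub_mem_Ioo hx) (by rw [stretch_reflect hS, sub_sub_cancel]; gcongr)
    simpa only [truncatedProfile_reflect hS, sub_sub_cancel] using hreflect

lemma deriv_sq_mul_travelTime_le (hL : IsLevelPair S m δ z₁ z₂) (P : IsConcaveProfile S m)
    (he : e ∈ Ioo 0 S) (hδe : δ < m e) (hx : x ∈ Ico 0 S)
    (hd : 0 < deriv m (stretch S z₁ z₂ x)) :
    deriv (truncatedProfile S m δ z₁ z₂) x ^ 2 * travelTime (truncatedProfile S m δ z₁ z₂) x ≤
      √(8 * (deriv m (stretch S z₁ z₂ x) ^ 3 * stretch S z₁ z₂ x)) := by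
  rcases hx.1.eq_or_lt with rfl | hx0
  · rw [travelTime_zero, mul_zero]
    exact Real.sqrt_nonneg _
  have hderiv := (hL.hasDerivAt_truncatedProfile P.differentiableOn (Ico_subset_Icc_self hx)).deriv
  obtain ⟨hc0, hc1⟩ := hL.slope_mem
  have hpos : 0 < deriv (truncatedProfile S m δ z₁ z₂) x := hderiv ▸ mul_pos hc0 hd
  refine ((hL.isConcaveProfile_truncatedProfile P he hδe).deriv_sq_mul_travelTime_le
    ⟨hx0, hx.2⟩ hpos).trans (Real.sqrt_le_sqrt ?_)
  rw [hderiv]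
  set c := (z₂ - z₁) / S
  set p := deriv m (stretch S z₁ z₂ x)
  have hcx : c * x ≤ stretch S z₁ z₂ x := by
    rw [stretch, mul_div_right_comm]
    exact le_add_of_nonneg_left hL.left_mem.1.le
  refine mul_le_mul_of_nonneg_left ?_ (by norm_num)
  calc (c * p) ^ 3 * x = c ^ 2 * (p ^ 3 * (c * x)) := by ring
    _ ≤ p ^ 3 * (c * x) := mul_le_of_le_one_left (by positivity) (pow_le_one₀ hc0.le hc1)
    _ ≤ p ^ 3 * stretch S z₁ z₂ x := by gcongr

section Limits

variable {ι : Type*} {l : Filter ι} {δ z₁ z₂ : ι → ℝ}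

lemma eventually_mem_Ioo (hL : ∀ k, IsLevelPair S m (δ k) (z₁ k) (z₂ k))
    (P : IsConcaveProfile S m) (hδ : Tendsto δ l (𝓝 0)) (he : e ∈ Ioo 0 S) :
    ∀ᶠ k in l, e ∈ Ioo (z₁ k) (z₂ k) :=
  (hδ.eventually_lt_const (P.pos e he)).mono fun k hk => (hL k).mem_Ioo_of_lt P.concaveOn he hk

lemma tendsto_left_endpoint (hL : ∀ k, IsLevelPair S m (δ k) (z₁ k) (z₂ k))
    (P : IsConcaveProfile S m) (hδ : Tendsto δ l (𝓝 0)) : Tendsto z₁ l (𝓝 0) := by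
  refine tendsto_order.2 ⟨fun a ha => Eventually.of_forall fun k => ha.trans (hL k).left_mem.1,
    fun a ha => ?_⟩
  have he : min a (S / 2) ∈ Ioo 0 S :=
    ⟨lt_min ha P.half_mem.1, (min_le_right _ _).trans_lt P.half_mem.2⟩
  exact (eventually_mem_Ioo hL P hδ he).mono fun k hk => hk.1.trans_le (min_le_left _ _)

lemma tendsto_right_endpoint (hL : ∀ k, IsLevelPair S m (δ k) (z₁ k) (z₂ k))
    (P : IsConcaveProfile S m) (hδ : Tendsto δ l (𝓝 0)) : Tendsto z₂ l (𝓝 S) := by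
  simpa using (tendsto_left_endpoint (fun k => (hL k).reflect) P.reflect hδ).const_sub S

lemma eventually_isConcaveProfile_truncatedProfile
    (hL : ∀ k, IsLevelPair S m (δ k) (z₁ k) (z₂ k)) (P : IsConcaveProfile S m)
    (hδ : Tendsto δ l (𝓝 0)) :
    ∀ᶠ k in l, IsConcaveProfile S (truncatedProfile S m (δ k) (z₁ k) (z₂ k)) :=
  (hδ.eventually_lt_const (P.pos _ P.half_mem)).mono fun k hk =>
    (hL k).isConcaveProfile_truncatedProfile P P.half_mem hk

lemma tendsto_truncatedProfile (hL : ∀ k, IsLevelPair S m (δ k) (z₁ k) (z₂ k))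
    (P : IsConcaveProfile S m) (hδ : Tendsto δ l (𝓝 0)) (hx : x ∈ Ioo 0 S) :
    Tendsto (fun p : ι × ℝ => truncatedProfile S m (δ p.1) (z₁ p.1) (z₂ p.1) p.2) (l ×ˢ 𝓝 x)
      (𝓝 (m x)) := by
  have hstretch := tendsto_stretch P.pos_right.ne' (tendsto_left_endpoint hL P hδ)
    (tendsto_right_endpoint hL P hδ) x
  have hlim := ((P.differentiableAt hx).continuousAt.tendsto.comp hstretch).sub
    (hδ.comp tendsto_fst)
  rwa [sub_zero] at hlim

lemma tendsto_stretch_nhdsGE_zero (hL : ∀ k, IsLevelPair S m (δ k) (z₁ k) (z₂ k))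
    (P : IsConcaveProfile S m) (hδ : Tendsto δ l (𝓝 0)) :
    Tendsto (fun p : ι × ℝ => stretch S (z₁ p.1) (z₂ p.1) p.2) (l ×ˢ 𝓝[≥] 0) (𝓝[>] 0) := by
  refine tendsto_nhdsWithin_iff.2 ⟨?_, ?_⟩
  · exact (tendsto_stretch P.pos_right.ne' (tendsto_left_endpoint hL P hδ)
      (tendsto_right_endpoint hL P hδ) 0).mono_left (prod_mono_right l nhdsWithin_le_nhds)
  · filter_upwards [tendsto_snd.eventually (Icc_mem_nhdsGE P.pos_right)] with p hp
    exact ((hL p.1).stretch_mem hp).1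

lemma tendsto_deriv_sq_mul_travelTime (hL : ∀ k, IsLevelPair S m (δ k) (z₁ k) (z₂ k))
    (P : IsConcaveProfile S m) (hδ : Tendsto δ l (𝓝 0))
    (h : Tendsto (fun z => deriv m z ^ 2 * travelTime m z) (𝓝[>] 0) (𝓝 0)) :
    Tendsto (fun p : ι × ℝ => deriv (truncatedProfile S m (δ p.1) (z₁ p.1) (z₂ p.1)) p.2 ^ 2 *
      travelTime (truncatedProfile S m (δ p.1) (z₁ p.1) (z₂ p.1)) p.2) (l ×ˢ 𝓝[≥] 0) (𝓝 0) := by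
  have hstretch := tendsto_stretch_nhdsGE_zero hL P hδ
  have hbound := (((P.tendsto_deriv_cube_mul h).comp hstretch).const_mul 8).sqrt
  rw [mul_zero, Real.sqrt_zero] at hbound
  refine squeeze_zero' (Eventually.of_forall fun p =>
    mul_nonneg (sq_nonneg _) (travelTime_nonneg _ _)) ?_ hbound
  filter_upwards [tendsto_fst.eventually (hδ.eventually_lt_const (P.pos _ P.half_mem)),
    tendsto_snd.eventually (Ico_mem_nhdsGE P.pos_right),
    hstretch.eventually P.eventually_deriv_pos] with p hδp hx hd
  exact (hL p.1).deriv_sq_mul_travelTime_le P P.half_mem hδp hx hd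

lemma tendsto_deriv_sq_mul_travelTime_sub (hL : ∀ k, IsLevelPair S m (δ k) (z₁ k) (z₂ k))
    (P : IsConcaveProfile S m) (hδ : Tendsto δ l (𝓝 0))
    (h : Tendsto (fun z => deriv m z ^ 2 * (travelTime m S - travelTime m z)) (𝓝[<] S) (𝓝 0)) :
    Tendsto (fun p : ι × ℝ => deriv (truncatedProfile S m (δ p.1) (z₁ p.1) (z₂ p.1)) p.2 ^ 2 *
      (travelTime (truncatedProfile S m (δ p.1) (z₁ p.1) (z₂ p.1)) S -
        travelTime (truncatedProfile S m (δ p.1) (z₁ p.1) (z₂ p.1)) p.2))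
      (l ×ˢ 𝓝[≤] S) (𝓝 0) := by
  have hreflect : Tendsto (fun z => deriv (fun z => m (S - z)) z ^ 2 *
      travelTime (fun z => m (S - z)) z) (𝓝[>] 0) (𝓝 0) := by
    refine (h.comp (tendsto_const_sub_nhdsGT_zero S)).congr' ?_
    filter_upwards [Ioo_mem_nhdsGT P.pos_right] with z hz
    exact (P.deriv_sq_mul_travelTime_reflect (Ioo_subset_Icc_self hz)).symm
  refine ((tendsto_deriv_sq_mul_travelTime (fun k => (hL k).reflect) P.reflect hδ hreflect).comp
    (tendsto_fst.prodMk ((tendsto_const_sub_nhdsLE S).comp tendsto_snd))).congr' ?_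
  filter_upwards [tendsto_fst.eventually (eventually_isConcaveProfile_truncatedProfile hL P hδ),
    tendsto_snd.eventually (Icc_mem_nhdsLE P.pos_right)] with p hp hx
  simp only [Function.comp_apply]
  rw [truncatedProfile_reflect P.pos_right.ne',
    hp.deriv_sq_mul_travelTime_reflect (const_sub_mem_Icc hx), sub_sub_cancel]

lemma tendstoConcaveProfile (hL : ∀ k, IsLevelPair S m (δ k) (z₁ k) (z₂ k))
    (P : IsConcaveProfile S m) (hδ : Tendsto δ l (𝓝 0))
    (hleft : Tendsto (fun z => deriv m z ^ 2 * travelTime m z) (𝓝[>] 0) (𝓝 0))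
    (hright : Tendsto (fun z => deriv m z ^ 2 * (travelTime m S - travelTime m z))
      (𝓝[<] S) (𝓝 0)) :
    TendstoConcaveProfile l S (fun k => truncatedProfile S m (δ k) (z₁ k) (z₂ k)) m where
  profile := P
  eventually_profile := eventually_isConcaveProfile_truncatedProfile hL P hδ
  eventually_le := Eventually.of_forall fun k _ hx => (hL k).truncatedProfile_le P hx
  tendsto _ hx := tendsto_truncatedProfile hL P hδ hx
  tendsto_left := tendsto_deriv_sq_mul_travelTime hL P hδ hleft
  tendsto_right := tendsto_deriv_sq_mul_travelTime_sub hL P hδ hright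

end Limits

end IsLevelPair

theorem Gtilde_converges_uniformly_general {ι : Type*} {l : Filter ι} [l.NeBot]
    [l.IsCountablyGenerated] {S : ℝ} {m g : ℝ → ℝ} {δ z₁ z₂ : ι → ℝ} {G : ι → ℝ → ℝ}
    (P : IsConcaveProfile S m)
    (hleft : Tendsto (fun z => deriv m z ^ 2 * travelTime m z) (𝓝[>] 0) (𝓝 0))
    (hright : Tendsto (fun z => deriv m z ^ 2 * (travelTime m S - travelTime m z))
      (𝓝[<] S) (𝓝 0))
    (hδ : Tendsto δ l (𝓝 0)) (hL : ∀ k, IsLevelPair S m (δ k) (z₁ k) (z₂ k))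
    (hg : IsTravelTimeInverse S m g)
    (hG : ∀ k, IsTravelTimeInverse S (truncatedProfile S m (δ k) (z₁ k) (z₂ k)) (G k)) :
    ContinuousOn (weightedSlope S m g) (Icc 0 (travelTime m S)) ∧
      TendstoUniformlyOn
        (fun k => weightedSlope S (truncatedProfile S m (δ k) (z₁ k) (z₂ k)) (G k))
        (weightedSlope S m g) l (Icc 0 (travelTime m S)) := by
  have H := IsLevelPair.tendstoConcaveProfile hL P hδ hleft hright
  have hlim := fun w hw => H.tendsto_weightedSlope hg hG (w := w) hw
  let F := fun k => weightedSlope S (truncatedProfile S m (δ k) (z₁ k) (z₂ k)) (G k)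
  exact ⟨continuousOn_of_forall_tendsto_prod (F := F) hlim,
    tendstoUniformlyOn_of_forall_tendsto_prod (F := F) isCompact_Icc hlim⟩

/-- Uniform convergence, case `S < ∞`: Let `m` satisfy (M) and (M-S) on
`(0,S)` with `S < ∞`, let `(δ_k)` be a vanishing sequence in `(0,δ̄)` with `δ̄ < max m`,
let `z_{δ_k,1} < z_{δ_k,2}` be the two solutions of `m(z) = δ_k`, and define
`m_{δ_k}(z) := m(z_{δ_k,1} + (z_{δ_k,2} − z_{δ_k,1}) z / S) − δ_k`,
`f_{δ_k}(z) := ∫₀^z √(2/m_{δ_k}(r)) dr`, `g_{δ_k} := f_{δ_k}⁻¹`, `g := f⁻¹` and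
`G̃_{δ_k}(w) := m_{δ_k}'(g_{δ_k}(w)) √(w (f_{δ_k}(S) − w))`. Then
`G̃(w) := m'(g(w)) √(w (f(S) − w))` (with `G̃(0) = G̃(f(S)) = 0`, automatic since
`√0 = 0`) is continuous on `[0, f(S)]`, and a subsequence of `(G̃_{δ_k})` converges to
`G̃` uniformly on `[0, f(S)]`. -/
theorem Gtilde_converges_uniformly
    (S : ℝ) (hS : 0 < S) (m : ℝ → ℝ)
    (hm_c2 : ContDiffOn ℝ 2 m (Ioo 0 S))
    (hm_pos : ∀ z ∈ Ioo (0 : ℝ) S, 0 < m z)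
    (hm_conc : ∀ z ∈ Ioo (0 : ℝ) S, deriv (deriv m) z ≤ 0)
    (hm0 : Tendsto m (𝓝[>] (0 : ℝ)) (𝓝 0))
    (hmS : Tendsto m (𝓝[<] S) (𝓝 0))
    (hMS0 : Tendsto
      (fun z : ℝ => (deriv m z) ^ 2 * ∫ r in Ioo (0 : ℝ) z, Real.sqrt (2 / m r))
      (𝓝[>] (0 : ℝ)) (𝓝 0))
    (hMSS : Tendsto
      (fun z : ℝ => (deriv m z) ^ 2 *
        ((∫ r in Ioo (0 : ℝ) S, Real.sqrt (2 / m r))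
          - ∫ r in Ioo (0 : ℝ) z, Real.sqrt (2 / m r)))
      (𝓝[<] S) (𝓝 0))
    (δbar : ℝ) (hδbar : 0 < δbar)
    (hδbarmax : ∃ z ∈ Ioo (0 : ℝ) S, δbar < m z)
    (δ : ℕ → ℝ) (hδmem : ∀ k, δ k ∈ Ioo (0 : ℝ) δbar)
    (hδ0 : Tendsto δ atTop (𝓝 0))
    (z1 z2 : ℕ → ℝ)
    (hz : ∀ k, z1 k ∈ Ioo (0 : ℝ) S ∧ z2 k ∈ Ioo (0 : ℝ) S ∧ z1 k < z2 k ∧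
      m (z1 k) = δ k ∧ m (z2 k) = δ k ∧
      ∀ z ∈ Ioo (0 : ℝ) S, m z = δ k → z = z1 k ∨ z = z2 k)
    (g : ℝ → ℝ)
    (hg_left : ∀ z ∈ Icc (0 : ℝ) S,
      g (∫ r in Ioo (0 : ℝ) z, Real.sqrt (2 / m r)) = z)
    (hg_right : ∀ w ∈ Icc (0 : ℝ) (∫ r in Ioo (0 : ℝ) S, Real.sqrt (2 / m r)),
      g w ∈ Icc (0 : ℝ) S ∧
      (∫ r in Ioo (0 : ℝ) (g w), Real.sqrt (2 / m r)) = w)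
    (gδ : ℕ → ℝ → ℝ)
    (hgδ_left : ∀ k, ∀ z ∈ Icc (0 : ℝ) S,
      gδ k (∫ r in Ioo (0 : ℝ) z,
        Real.sqrt (2 / (m (z1 k + (z2 k - z1 k) * r / S) - δ k))) = z)
    (hgδ_right : ∀ k, ∀ w ∈ Icc (0 : ℝ) (∫ r in Ioo (0 : ℝ) S,
        Real.sqrt (2 / (m (z1 k + (z2 k - z1 k) * r / S) - δ k))),
      gδ k w ∈ Icc (0 : ℝ) S ∧
      (∫ r in Ioo (0 : ℝ) (gδ k w),
        Real.sqrt (2 / (m (z1 k + (z2 k - z1 k) * r / S) - δ k))) = w) :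
    ContinuousOn
      (fun w : ℝ => deriv m (g w) * Real.sqrt
        (w * ((∫ r in Ioo (0 : ℝ) S, Real.sqrt (2 / m r)) - w)))
      (Icc 0 (∫ r in Ioo (0 : ℝ) S, Real.sqrt (2 / m r))) ∧
    ∃ φ : ℕ → ℕ, StrictMono φ ∧
      TendstoUniformlyOn
        (fun k (w : ℝ) =>
          deriv (fun x : ℝ => m (z1 (φ k) + (z2 (φ k) - z1 (φ k)) * x / S) - δ (φ k))
              (gδ (φ k) w)
            * Real.sqrt (w * ((∫ r in Ioo (0 : ℝ) S,
                Real.sqrt (2 / (m (z1 (φ k) + (z2 (φ k) - z1 (φ k)) * r / S) - δ (φ k))))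
              - w)))
        (fun w : ℝ => deriv m (g w) * Real.sqrt
          (w * ((∫ r in Ioo (0 : ℝ) S, Real.sqrt (2 / m r)) - w)))
        atTop (Icc 0 (∫ r in Ioo (0 : ℝ) S, Real.sqrt (2 / m r))) := by
  have P : IsConcaveProfile S m := .of_deriv2_nonpos hS hm_c2 hm_pos hm_conc hm0 hmS
  have hL : ∀ k, IsLevelPair S m (δ k) (z1 k) (z2 k) := fun k => by
    obtain ⟨hz1, hz2, hlt, heq1, heq2, -⟩ := hz k
    exact ⟨hz1, hz2, hlt, heq1, heq2⟩
  obtain ⟨hcont, hunif⟩ :=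
    Gtilde_converges_uniformly_general P hMS0 hMSS hδ0 hL hg_right hgδ_right
  exact ⟨hcont, id, strictMono_id, hunif⟩
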